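/- For every i ∈ [n], the saturation of the ideal J_n + ⟨p^+_{n,i}⟩ with respect to the product of all variables equals J_n + ⟨p^+_{n,1}, …, p^+_{n,n}⟩: ( J_n + ⟨p^+_{n,i}⟩ ) : ( ∏_{(j,k) ∈ P} x_{jk} )^∞ = J_n + ⟨ p^+_{n,j} : j ∈ [n] ⟩. (When n is even all p^+_{n,j} coincide with the single polynomial p^+_n.) -/

import Mathlib

open scoped BigOperators

namespace Veronese

open MvPolynomial

/-- `c m = C(m,2)`. -/
def c (m : ℕ) : ℕ := m.choose 2

variable (n : ℕ)

/-- multiplicity (as ℤ) of the index `i` in the unordered pair `s`. -/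
def wt (s : Sym2 (Fin n)) : Fin n → ℤ :=
  Sym2.lift ⟨fun a b i => (if i = a then 1 else 0) + (if i = b then 1 else 0),
    fun a b => funext fun i => add_comm _ _⟩ s

/-- The Veronese grading map `V_n : ℤ^P → ℤ^n`, sending `e_{ij} ↦ e_i + e_j`. -/
def Vmap : (Sym2 (Fin n) → ℤ) →ₗ[ℤ] (Fin n → ℤ) where
  toFun u := fun i => ∑ s : Sym2 (Fin n), u s * wt n s i
  map_add' u v := funext fun i => by
    simp [add_mul, Finset.sum_add_distrib]
  map_smul' m u := funext fun i => by
    simp [Finset.mul_sum, smul_eq_mul, mul_assoc]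

/-- The Veronese lattice `L_n = ker V_n`. -/
def Llat : Submodule ℤ (Sym2 (Fin n) → ℤ) := LinearMap.ker (Vmap n)

/-- standard basis vector `e_{ij}` of `ℤ^P`. -/
def e (i j : Fin n) : Sym2 (Fin n) → ℤ := Pi.single s(i, j) 1

lemma e_comm (i j : Fin n) : e n i j = e n j i := by
  unfold e; rw [Sym2.eq_swap]

/-- `[ij|ij] = e_{ii} + e_{jj} - 2 e_{ij}`. -/
def minorVec (i j : Fin n) : Sym2 (Fin n) → ℤ := e n i i + e n j j - 2 • e n i j

/-- The principal minor lattice `L'_n`. -/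
def L'lat : Submodule ℤ (Sym2 (Fin n) → ℤ) :=
  Submodule.span ℤ {v | ∃ i j : Fin n, i < j ∧ v = minorVec n i j}

/-- the last index `n` (zero-based: `n-1`) of `Fin n`. -/
def lastIdx (hn : 0 < n) : Fin n := ⟨n - 1, Nat.sub_lt hn one_pos⟩

/-- embedding `[n-1] → [n]`. -/
def ι : Fin (n - 1) → Fin n := Fin.castLE (Nat.sub_le n 1)

/-- `[in|jn] = e_{ij} + e_{nn} - e_{in} - e_{jn}` for `i,j ∈ [n-1]`. -/
def Bvec (hn : 0 < n) : Sym2 (Fin (n - 1)) → (Sym2 (Fin n) → ℤ) :=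
  Sym2.lift ⟨fun i j =>
      e n (ι n i) (ι n j) + e n (lastIdx n hn) (lastIdx n hn)
        - e n (ι n i) (lastIdx n hn) - e n (ι n j) (lastIdx n hn),
    fun i j => by dsimp only; rw [e_comm n (ι n i) (ι n j)]; ring⟩

/-- The family `B'`: `[in|in]` on the diagonal, `2[in|jn]` off it. -/
noncomputable def B'vec (hn : 0 < n) (s : Sym2 (Fin (n - 1))) : Sym2 (Fin n) → ℤ :=
  if s.IsDiag then Bvec n hn s else 2 • Bvec n hn s

/-- multiplicity (as ℕ) of the index `i` in the unordered pair `s`. -/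
def wtN (s : Sym2 (Fin n)) : Fin n → ℕ :=
  Sym2.lift ⟨fun a b i => (if i = a then 1 else 0) + (if i = b then 1 else 0),
    fun a b => funext fun i => add_comm _ _⟩ s

/-- The Veronese degree of an exponent vector `u ∈ ℕ^P`. -/
def VN (u : Sym2 (Fin n) →₀ ℕ) : Fin n → ℕ := fun i => ∑ s : Sym2 (Fin n), u s * wtN n s i

/-- The fiber `V_n^{-1}[b] = {u ∈ ℕ^P : V_n u = b}`. -/
def fiber (b : Fin n → ℕ) : Set (Sym2 (Fin n) →₀ ℕ) := {u | VN n u = b}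

/-- natural inclusion `ℕ^P → ℤ^P`. -/
def toZ (u : Sym2 (Fin n) →₀ ℕ) : Sym2 (Fin n) → ℤ := fun s => (u s : ℤ)

lemma fiber_finite (b : Fin n → ℕ) : (fiber n b).Finite := by
  classical
  have hsub : fiber n b ⊆
      ↑(Finset.Iic ((Finsupp.equivFunOnFinite.symm fun _ => ∑ i, b i) : Sym2 (Fin n) →₀ ℕ)) := by
    intro u hu
    simp only [Finset.coe_Iic, Set.mem_Iic, Finsupp.le_def]
    intro s
    induction s using Sym2.ind with
    | _ i j =>
      have h1 : u s(i, j) * wtN n s(i, j) i ≤ VN n u i :=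
        Finset.single_le_sum (f := fun s => u s * wtN n s i)
          (fun s _ => Nat.zero_le _) (Finset.mem_univ s(i, j))
      have h2 : 1 ≤ wtN n s(i, j) i := by
        simp only [wtN, Sym2.lift_mk, if_pos rfl]
        exact Nat.le_add_right 1 _
      have h3 : u s(i, j) ≤ b i := by
        have hb : VN n u i = b i := congrFun hu i
        calc u s(i, j) ≤ u s(i, j) * wtN n s(i, j) i := Nat.le_mul_of_pos_right _ h2
          _ ≤ VN n u i := h1
          _ = b i := hb
      calc u s(i, j) ≤ b i := h3
        _ ≤ ∑ i, b i := Finset.single_le_sum (fun _ _ => Nat.zero_le _) (Finset.mem_univ _)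
        _ = (Finsupp.equivFunOnFinite.symm fun _ => ∑ i, b i) s(i, j) := by
            simp
  exact Set.Finite.subset (Finset.finite_toSet _) hsub

variable (k : Type*) [Field k]

/-- the polynomial ring `k[x_{ij}]`. -/
abbrev R := MvPolynomial (Sym2 (Fin n)) k

/-- The principal minor ideal `J_n`. -/
noncomputable def Jideal : Ideal (R n k) :=
  Ideal.span {f | ∃ i j : Fin n, i < j ∧ f = X s(i, i) * X s(j, j) - X s(i, j) ^ 2}

/-- The map `x_{ij} ↦ t_i t_j`. -/
noncomputable def veroHom : R n k →ₐ[k] MvPolynomial (Fin n) k :=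
  aeval fun s => Sym2.lift ⟨fun a b => X a * X b, fun a b => mul_comm _ _⟩ s

/-- The second Veronese ideal `I_n`. -/
noncomputable def Iideal : Ideal (R n k) := RingHom.ker (veroHom n k)

/-- A ℤ₂-twisting: an automorphism sending each variable to ± itself. -/
def IsTwisting (φ : R n k ≃ₐ[k] R n k) : Prop :=
  ∀ s : Sym2 (Fin n), φ (X s) = X s ∨ φ (X s) = - X s

/-- `f` is V_n-homogeneous of degree `b`. -/
def VHomog (f : R n k) (b : Fin n → ℕ) : Prop := ∀ u ∈ f.support, VN n u = b

/-- The fiber over `b` as a finite set. -/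
noncomputable def fiberFinset (b : Fin n → ℕ) : Finset (Sym2 (Fin n) →₀ ℕ) :=
  (fiber_finite n b).toFinset

/-- generating function of the canonical (0/1 off-diagonal) representatives of
the fiber over `b`. -/
noncomputable def pplusAt (b : Fin n → ℕ) : R n k :=
  ∑ u ∈ (fiberFinset n b).filter (fun u => ∀ s : Sym2 (Fin n), ¬s.IsDiag → u s ≤ 1),
    monomial u (1 : k)

/-- `p⁺_{n,j}` (for `n` odd): fiber over `(n-2,…,n-2) + e_j`. -/
noncomputable def pplusOdd (j : Fin n) : R n k :=
  pplusAt n k fun i => (n - 2) + if i = j then 1 else 0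

/-- `p⁺_n` (for `n` even): fiber over `(n-2,…,n-2)`. -/
noncomputable def pplusEven : R n k :=
  pplusAt n k fun _ => n - 2

/-- `p_n = ∏_{i<j∈[n-1]} (x_{ij} x_{nn} + x_{in} x_{jn})`. -/
noncomputable def pn (hn : 0 < n) : R n k :=
  ∏ p ∈ Finset.univ.filter (fun p : Fin (n - 1) × Fin (n - 1) => p.1 < p.2),
    (X s(ι n p.1, ι n p.2) * X s(lastIdx n hn, lastIdx n hn)
      + X s(ι n p.1, lastIdx n hn) * X s(ι n p.2, lastIdx n hn))


/-- the `V_n`-degree of `p⁺_{n,j}`: `(n-2,…,n-2) + e_j` if `n` is odd,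
`(n-2,…,n-2)` if `n` is even. -/
def bsel (j : Fin n) : Fin n → ℕ :=
  fun i => if n % 2 = 1 then (n - 2) + (if i = j then 1 else 0) else n - 2

/-- the polynomial `p⁺_{n,j}` (independent of `j` for `n` even). -/
noncomputable def pplus (j : Fin n) : R n k := pplusAt n k (bsel n j)

/-!
Modulo `Jideal n k`, a monomial `x^u` is determined by its Veronese degree together with the graph
formed by the off-diagonal entries of odd multiplicity. Hence `R n k / Jideal n k` embeds in the
monoid algebra of these bidegrees, where monomials are not zero divisors. The graphs belonging to
Veronese degree `a` are the `a`-joins, a coset of the cycle space (the graphs with even degrees),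
and `pplus n k j` maps to the sum over all joins of its degree, which is invariant under the cycle
space. Conversely, an invariant element of the image is a linear combination of sums over all
`a`-joins, for various `a`. Each such `a` is at least `n - 2` everywhere, because some `a`-join has
degree at least `n - 2` at a prescribed vertex; so the sum over the `a`-joins is a monomial multiple
of the image of some `pplus n k j`. Thus `Jideal n k + ⟨pplus n k j : j⟩` is the preimage of the
invariants, and invariance may be tested after multiplication by a monomial. Finally
`X s(i, i) * pplus n k j` is congruent to a variable times `pplus n k i`, so that the saturation of
`Jideal n k + ⟨pplus n k i⟩` contains every `pplus n k j`.
-/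

section MonomialMaps

variable {σ Γ A : Type*}

lemma mapDomainAlgHom_monomial [CommSemiring A] [AddCommMonoid Γ] (φ : (σ →₀ ℕ) →+ Γ)
    (u : σ →₀ ℕ) (r : A) :
    AddMonoidAlgebra.mapDomainAlgHom A A φ (monomial u r) = AddMonoidAlgebra.single (φ u) r :=
  AddMonoidAlgebra.mapDomain_single

/-- If `φ u = φ v` forces `x^u ≡ x^v` modulo `I`, then any section of `φ` on exponents induces a
linear map that recovers a polynomial modulo `I` from its image. -/
lemma ker_mapDomainAlgHom_le [CommRing A] [AddCommMonoid Γ] (φ : (σ →₀ ℕ) →+ Γ)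
    {I : Ideal (MvPolynomial σ A)}
    (hI : ∀ u v, φ u = φ v → (monomial u 1 - monomial v 1 : MvPolynomial σ A) ∈ I) :
    RingHom.ker (AddMonoidAlgebra.mapDomainAlgHom A A φ) ≤ I := by
  intro f hf
  let π := Ideal.Quotient.mkₐ A I
  let L := Finsupp.linearCombination A fun γ => π (monomial (Function.invFun φ γ) 1)
  have hL : ∀ u, L (Finsupp.single (φ u) 1) = π (monomial u 1) := fun u => by
    rw [Finsupp.linearCombination_single, one_smul]
    exact Ideal.Quotient.eq.2 (hI _ _ (Function.invFun_eq ⟨u, rfl⟩))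
  have hLπ : ∀ g, L (AddMonoidAlgebra.mapDomainAlgHom A A φ g).coeff = π g := fun g => by
    induction g using MvPolynomial.induction_on' with
    | monomial u r =>
      have hr : monomial u r = r • monomial u (1 : A) := by rw [smul_monomial, smul_eq_mul, mul_one]
      rw [hr, map_smul, map_smul, AddMonoidAlgebra.coeff_smul, map_smul]
      rw [mapDomainAlgHom_monomial, AddMonoidAlgebra.coeff_single, hL]
    | add p q hp hq => rw [map_add, AddMonoidAlgebra.coeff_add, map_add, hp, hq, map_add]
  have := hLπ f
  rw [RingHom.mem_ker.1 hf, AddMonoidAlgebra.coeff_zero, map_zero] at this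
  exact Ideal.Quotient.eq_zero_iff_mem.1 this.symm

lemma single_one_mem_nonZeroDivisors [CommSemiring A] [AddCancelCommMonoid Γ] (γ : Γ) :
    AddMonoidAlgebra.single γ (1 : A) ∈ nonZeroDivisors (AddMonoidAlgebra A Γ) := by
  refine mem_nonZeroDivisors_iff_left.2 fun x hx => ?_
  ext δ
  have := congrArg (fun y => y.coeff (γ + δ)) hx
  simpa only [AddMonoidAlgebra.coeff_single_mul_add, one_mul, AddMonoidAlgebra.coeff_zero,
    Finsupp.coe_zero, Pi.zero_apply] using this

end MonomialMaps

section VeroneseDegree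

variable {n}

lemma wtN_eq (s : Sym2 (Fin n)) (i : Fin n) :
    wtN n s i = ∑ j, (if s = s(i, j) then 1 else 0) + if s = s(i, i) then 1 else 0 := by
  induction s with | _ a b
  rcases eq_or_ne a i with rfl | ha
  · rcases eq_or_ne b a with rfl | hb
    · simp [wtN]
    · simp [wtN, hb, hb.symm]
  · rcases eq_or_ne b i with rfl | hb
    · simp [wtN, ha, ha.symm]
    · simp [wtN, ha.symm, hb.symm, ha, hb]

lemma VN_apply (u : Sym2 (Fin n) →₀ ℕ) (i : Fin n) :
    VN n u i = ∑ j ∈ {i}ᶜ, u s(i, j) + 2 * u s(i, i) := by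
  have h : VN n u i = ∑ j, u s(i, j) + u s(i, i) := by
    simp only [VN, wtN_eq, mul_add, Finset.mul_sum, Finset.sum_add_distrib]
    rw [Finset.sum_comm]
    simp
  rw [h, Fintype.sum_eq_add_sum_compl i]
  ring

lemma VN_add (u v : Sym2 (Fin n) →₀ ℕ) : VN n (u + v) = VN n u + VN n v := by
  funext i
  simp only [VN, Finsupp.add_apply, add_mul, Finset.sum_add_distrib, Pi.add_apply]

lemma VN_single (i j : Fin n) (m : ℕ) :
    VN n (Finsupp.single s(i, j) m) = m • (Pi.single i 1 + Pi.single j 1) := by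
  funext l
  simp [VN, wtN, Finsupp.single_apply, Pi.single_apply]

lemma even_sum_VN (u : Sym2 (Fin n) →₀ ℕ) : Even (∑ i, VN n u i) := by
  simp only [VN]
  rw [Finset.sum_comm]
  refine Finset.even_sum _ fun s _ => ?_
  rw [← Finset.mul_sum]
  refine Even.mul_left ?_ _
  induction s with | _ a b
  simp [wtN, Finset.sum_add_distrib]

lemma exists_VN_eq_count (m : Multiset (Fin n)) :
    ∃ u, VN n u = (m.count ·) ∨ ∃ j, VN n u + Pi.single j 1 = (m.count ·) := by
  induction m using Multiset.induction_on with
  | empty => exact ⟨0, .inl (by funext i; simp [VN])⟩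
  | cons i m ih =>
    have hcons : ((i ::ₘ m).count · : Fin n → ℕ) = (m.count ·) + Pi.single i 1 := by
      funext j
      simp [Multiset.count_cons, Pi.single_apply]
    obtain ⟨u, h | ⟨j, h⟩⟩ := ih
    · exact ⟨u, .inr ⟨i, by rw [hcons, h]⟩⟩
    · exact ⟨u + Finsupp.single s(j, i) 1, .inl (by
        rw [hcons, ← h, VN_add, VN_single, one_smul, add_assoc])⟩

lemma exists_VN_eq {d : Fin n → ℕ} (hd : Even (∑ i, d i)) : ∃ u, VN n u = d := by
  have hcount : ((Finsupp.toMultiset (Finsupp.equivFunOnFinite.symm d)).count ·) = d := by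
    funext i; simp
  obtain ⟨u, h | ⟨j, h⟩⟩ := hcount ▸ exists_VN_eq_count _
  · exact ⟨u, h⟩
  · have hsum : ∑ i, d i = ∑ i, VN n u i + 1 := by
      simp [← h, Finset.sum_add_distrib]
    exact absurd (hsum ▸ hd) (by simpa [Nat.even_add_one] using even_sum_VN u)

end VeroneseDegree

section Joins

variable {n}

/-- The vector of parities of the off-diagonal entries of an exponent vector, extended by zero to
the diagonal. -/
def parity (u : Sym2 (Fin n) →₀ ℕ) : Sym2 (Fin n) → ZMod 2 :=
  fun s => if s.IsDiag then 0 else u s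

/-- The `a`-joins: graphs on `Fin n` whose degree at each vertex `i` has the parity of `a i`. A
graph is encoded by the indicator function of its edges, which vanishes on the diagonal. -/
def joins (a : Fin n → ℕ) : Finset (Sym2 (Fin n) → ZMod 2) :=
  {T | (∀ i, T s(i, i) = 0) ∧ ∀ i, ∑ j ∈ {i}ᶜ, T s(i, j) = a i}

/-- The degree of the vertex `i` in the graph with edge indicator `T`. -/
def degree (T : Sym2 (Fin n) → ZMod 2) (i : Fin n) : ℕ := ∑ j ∈ {i}ᶜ, (T s(i, j)).val

lemma parity_diag (u : Sym2 (Fin n) →₀ ℕ) (i : Fin n) : parity u s(i, i) = 0 := by simp [parity]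

lemma parity_of_ne (u : Sym2 (Fin n) →₀ ℕ) {i j : Fin n} (h : i ≠ j) :
    parity u s(i, j) = u s(i, j) := by simp [parity, h]

lemma parity_add (u v : Sym2 (Fin n) →₀ ℕ) : parity (u + v) = parity u + parity v := by
  funext s
  by_cases h : s.IsDiag <;> simp [parity, h]

lemma mem_joins {a : Fin n → ℕ} {T : Sym2 (Fin n) → ZMod 2} :
    T ∈ joins a ↔ (∀ i, T s(i, i) = 0) ∧ ∀ i, ∑ j ∈ {i}ᶜ, T s(i, j) = a i := by
  simp [joins]

lemma parity_mem_joins (u : Sym2 (Fin n) →₀ ℕ) : parity u ∈ joins (VN n u) := by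
  refine mem_joins.2 ⟨parity_diag u, fun i => ?_⟩
  rw [VN_apply, Finset.sum_congr rfl fun j hj => parity_of_ne u (by simpa [eq_comm] using hj)]
  simp [CharTwo.two_eq_zero]

lemma add_mem_joins_iff {a b : Fin n → ℕ} {S T : Sym2 (Fin n) → ZMod 2} (hS : S ∈ joins a) :
    S + T ∈ joins (a + b) ↔ T ∈ joins b := by
  rw [mem_joins] at hS
  simp [mem_joins, Finset.sum_add_distrib, hS.1, hS.2]

lemma pi_zmod_two_add_self {α : Type*} (T : α → ZMod 2) : T + T = 0 :=
  funext fun _ => CharTwo.add_self_eq_zero _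

lemma add_mem_joins_zero {a : Fin n → ℕ} {S T : Sym2 (Fin n) → ZMod 2} (hS : S ∈ joins a)
    (hT : T ∈ joins a) : S + T ∈ joins 0 := by
  rwa [← add_mem_joins_iff hS, add_zero, ← add_assoc, pi_zmod_two_add_self, zero_add]

lemma sum_mem_joins_zero {ι : Type*} {s : Finset ι} {T : ι → Sym2 (Fin n) → ZMod 2}
    (hT : ∀ x ∈ s, T x ∈ joins 0) : ∑ x ∈ s, T x ∈ joins 0 :=
  Finset.sum_induction T (· ∈ joins 0) (fun _ _ hS hT => (add_mem_joins_iff (b := 0) hS).2 hT)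
    (by simp [mem_joins]) hT

lemma degree_parity_le (u : Sym2 (Fin n) →₀ ℕ) (i : Fin n) : degree (parity u) i ≤ VN n u i := by
  rw [VN_apply]
  refine (Finset.sum_le_sum fun j hj => ?_).trans (Nat.le_add_right _ _)
  rw [parity_of_ne u (by simpa [eq_comm] using hj), ZMod.val_natCast]
  exact Nat.mod_le _ _

lemma degree_le (T : Sym2 (Fin n) → ZMod 2) (i : Fin n) : degree T i ≤ n - 1 :=
  calc degree T i ≤ ∑ j ∈ {i}ᶜ, 1 := Finset.sum_le_sum fun j _ => Nat.le_of_lt_succ (ZMod.val_lt _)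
    _ = n - 1 := by simp [Finset.card_compl]

lemma degree_modEq {a : Fin n → ℕ} {T : Sym2 (Fin n) → ZMod 2} (hT : T ∈ joins a) (i : Fin n) :
    degree T i ≡ a i [MOD 2] := by
  rw [← ZMod.natCast_eq_natCast_iff, ← (mem_joins.1 hT).2 i]
  simp [degree]

/-- The edge indicator of the triangle on `i`, `j`, `l`. -/
noncomputable def triangle (i j l : Fin n) : Sym2 (Fin n) → ZMod 2 :=
  parity (Finsupp.single s(i, j) 1 + Finsupp.single s(j, l) 1 + Finsupp.single s(l, i) 1)

lemma triangle_mem_joins (i j l : Fin n) : triangle i j l ∈ joins 0 := by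
  set d : Sym2 (Fin n) →₀ ℕ :=
    Finsupp.single s(i, i) 1 + Finsupp.single s(j, j) 1 + Finsupp.single s(l, l) 1 with hd
  have hpar : parity d = 0 := by
    funext s
    by_cases hs : s.IsDiag
    · simp [parity, hs]
    · have hne : ∀ m, s(m, m) ≠ s := by rintro m rfl; exact hs rfl
      simp [parity, hs, hd, hne]
  have hVN : VN n d =
      VN n (Finsupp.single s(i, j) 1 + Finsupp.single s(j, l) 1 + Finsupp.single s(l, i) 1) := by
    simp only [hd, VN_add, VN_single]
    ring
  have := add_mem_joins_zero (parity_mem_joins _) (hVN ▸ parity_mem_joins d)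
  rwa [hpar, add_zero] at this

lemma triangle_apply {i j l x : Fin n} (hji : j ≠ i) (hli : l ≠ i) (hxi : x ≠ i) (hxl : x ≠ l) :
    triangle i j l s(i, x) = if x = j then 1 else 0 := by
  rw [triangle, parity_of_ne _ hxi.symm]
  simp [Finsupp.single_apply, hji, hli.symm, hxi.symm, hxl.symm, eq_comm]

lemma exists_mem_joins_forall_eq_one {a : Fin n → ℕ} {T : Sym2 (Fin n) → ZMod 2} (hT : T ∈ joins a)
    {i l : Fin n} (hli : l ≠ i) : ∃ T' ∈ joins a, ∀ x, x ≠ i → x ≠ l → T' s(i, x) = 1 := by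
  let S : Finset (Fin n) := {j | j ≠ i ∧ T s(i, j) = 0}
  have hS : ∑ j ∈ S, triangle i j l ∈ joins 0 :=
    sum_mem_joins_zero fun j _ => triangle_mem_joins i j l
  refine ⟨∑ j ∈ S, triangle i j l + T, ?_, fun x hxi hxl => ?_⟩
  · simpa using (add_mem_joins_iff (b := a) hS).2 hT
  · have hsum : (∑ j ∈ S, triangle i j l) s(i, x) = if x ∈ S then 1 else 0 := by
      rw [Finset.sum_apply, Finset.sum_congr rfl fun j hj =>
        triangle_apply (Finset.mem_filter.1 hj).2.1 hli hxi hxl, Finset.sum_ite_eq]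
    have hbit : ∀ y : ZMod 2, (if y = 0 then 1 else 0) + y = 1 := by decide
    simpa [hsum, S, hxi] using hbit (T s(i, x))

lemma exists_mem_joins_le_degree {a : Fin n → ℕ} {T : Sym2 (Fin n) → ZMod 2} (hT : T ∈ joins a)
    (i : Fin n) : ∃ T' ∈ joins a, n - 2 ≤ degree T' i := by
  by_cases hi : ∃ l, l ≠ i
  · obtain ⟨l, hl⟩ := hi
    obtain ⟨T', hT', h⟩ := exists_mem_joins_forall_eq_one hT hl
    refine ⟨T', hT', ?_⟩
    calc n - 2 = ∑ j ∈ {i, l}ᶜ, 1 := by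
          rw [Finset.sum_const, Finset.card_compl, Finset.card_pair hl.symm, Fintype.card_fin,
            smul_eq_mul, mul_one]
      _ = ∑ j ∈ {i, l}ᶜ, (T' s(i, j)).val := Finset.sum_congr rfl fun j hj => by
          simp only [Finset.mem_compl, Finset.mem_insert, Finset.mem_singleton, not_or] at hj
          rw [h j hj.1 hj.2, ZMod.val_one]
      _ ≤ degree T' i := Finset.sum_le_sum_of_subset (by simp)
  · refine ⟨T, hT, ?_⟩
    push Not at hi
    have : n ≤ 1 := by simpa using Fintype.card_le_one_iff.2 fun x y => (hi x).trans (hi y).symm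
    omega

end Joins

section Bidegree

variable {n}

/-- The monoid of pairs of a Veronese degree and an edge indicator; it grades `R n k / Jideal n k`
with pieces of dimension at most one. -/
abbrev Bidegree (n : ℕ) := (Fin n → ℕ) × (Sym2 (Fin n) → ZMod 2)

/-- The bidegree of an exponent vector; two monomials agree modulo `Jideal n k` exactly when they
have the same bidegree. -/
def bidegree : (Sym2 (Fin n) →₀ ℕ) →+ Bidegree n where
  toFun u := (VN n u, parity u)
  map_zero' := by ext <;> simp [VN, parity]
  map_add' u v := by rw [VN_add, parity_add, Prod.mk_add_mk]

lemma bidegree_apply (u : Sym2 (Fin n) →₀ ℕ) : bidegree u = (VN n u, parity u) := rfl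

lemma bidegree_single_diag (i : Fin n) (m : ℕ) :
    bidegree (Finsupp.single s(i, i) m) = (Pi.single i (2 * m), 0) := by
  refine Prod.ext ?_ (funext fun s => ?_)
  · change VN n _ = _
    rw [VN_single, ← Pi.single_add, ← Pi.single_smul, smul_eq_mul, mul_comm m]
  · by_cases hs : s.IsDiag
    · simp [bidegree_apply, parity, hs]
    · have : s(i, i) ≠ s := by rintro rfl; exact hs rfl
      simp [bidegree_apply, parity, this]

lemma bidegree_single_two (i j : Fin n) :
    bidegree (Finsupp.single s(i, j) 2) =
      bidegree (Finsupp.single s(i, i) 1 + Finsupp.single s(j, j) 1) := by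
  have hdouble : Finsupp.single s(i, j) 2 =
      Finsupp.single s(i, j) 1 + Finsupp.single s(i, j) 1 := by rw [← Finsupp.single_add]
  refine Prod.ext ?_ ?_
  · change VN n _ = VN n _
    simp only [VN_add, VN_single]
    ring
  · rw [hdouble, map_add, map_add, bidegree_single_diag, bidegree_single_diag]
    simp only [bidegree_apply, Prod.snd_add, pi_zmod_two_add_self, add_zero]

/-- The exponent vectors whose off-diagonal entries are at most one. They are normal forms for the
monomials modulo `Jideal n k`, and the monomials of `pplusAt`. -/
def IsReduced (u : Sym2 (Fin n) →₀ ℕ) : Prop := ∀ s : Sym2 (Fin n), ¬s.IsDiag → u s ≤ 1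

lemma IsReduced.eq_of_bidegree_eq {u v : Sym2 (Fin n) →₀ ℕ} (hu : IsReduced u) (hv : IsReduced v)
    (h : bidegree u = bidegree v) : u = v := by
  rw [bidegree_apply, bidegree_apply, Prod.mk.injEq] at h
  have hoff : ∀ i j, i ≠ j → u s(i, j) = v s(i, j) := fun i j hij => by
    have hmod : (u s(i, j) : ZMod 2) = v s(i, j) := by
      rw [← parity_of_ne u hij, ← parity_of_ne v hij, h.2]
    have := (ZMod.natCast_eq_natCast_iff' _ _ _).1 hmod
    have := hu s(i, j) hij
    have := hv s(i, j) hij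
    omega
  ext s
  induction s with | _ i j
  rcases eq_or_ne i j with rfl | hij
  · have hi := congrFun h.1 i
    rw [VN_apply, VN_apply, Finset.sum_congr rfl fun j hj =>
      hoff i j (by simpa [eq_comm] using hj)] at hi
    omega
  · exact hoff i j hij

lemma exists_isReduced_bidegree_eq {a : Fin n → ℕ} {T : Sym2 (Fin n) → ZMod 2} (hT : T ∈ joins a)
    (hdeg : ∀ i, degree T i ≤ a i) : ∃ u, IsReduced u ∧ bidegree u = (a, T) := by
  have hdiag := (mem_joins.1 hT).1
  let t : Sym2 (Fin n) →₀ ℕ := Finsupp.equivFunOnFinite.symm fun s => (T s).val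
  let d : Sym2 (Fin n) →₀ ℕ := ∑ i, Finsupp.single s(i, i) ((a i - degree T i) / 2)
  have ht : bidegree t = (degree T, T) := by
    refine Prod.ext (funext fun i => ?_) (funext fun s => ?_)
    · simp [bidegree_apply, VN_apply, t, degree, hdiag]
    · induction s with | _ i j
      rcases eq_or_ne i j with rfl | hij
      · simp [bidegree_apply, parity, hdiag]
      · simp [bidegree_apply, parity, hij, t]
  have hd : bidegree d = (a - degree T, 0) := by
    have heven : ∀ i, 2 * ((a i - degree T i) / 2) = a i - degree T i := fun i =>
      Nat.mul_div_cancel' ((Nat.modEq_iff_dvd' (hdeg i)).1 (degree_modEq hT i))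
    simp only [d, map_sum, bidegree_single_diag, heven]
    refine Prod.ext ?_ ?_
    · rw [Prod.fst_sum]
      exact Finset.univ_sum_single (a - degree T)
    · simp [Prod.snd_sum]
  refine ⟨t + d, fun s hs => ?_, ?_⟩
  · have hds : d s = 0 := by
      simp only [d, Finsupp.finsetSum_apply]
      refine Finset.sum_eq_zero fun i _ => Finsupp.single_eq_of_ne ?_
      rintro rfl
      exact hs rfl
    rw [Finsupp.add_apply, hds, add_zero]
    exact Nat.le_of_lt_succ (ZMod.val_lt (T s))
  · rw [map_add, ht, hd, Prod.mk_add_mk, add_zero, add_tsub_cancel_of_le hdeg]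

end Bidegree

section JoinSums

variable {n} {A : Type*} [CommSemiring A]

variable (A) in
/-- The sum of all monomials of Veronese degree `a` in the monoid algebra of bidegrees, one for each
`a`-join. It is the image of `pplusAt n k a` if `a` bounds the degrees of all `a`-joins. -/
noncomputable def joinSum (a : Fin n → ℕ) : AddMonoidAlgebra A (Bidegree n) :=
  ∑ T ∈ joins a, AddMonoidAlgebra.single (a, T) 1

lemma coeff_joinSum (a b : Fin n → ℕ) (T : Sym2 (Fin n) → ZMod 2) :
    (joinSum A a).coeff (b, T) = if b = a ∧ T ∈ joins a then 1 else 0 := by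
  rcases eq_or_ne b a with rfl | hba
  · simp [joinSum, AddMonoidAlgebra.coeff_sum, Finsupp.single_apply]
  · simp [joinSum, AddMonoidAlgebra.coeff_sum, hba]

lemma single_mul_joinSum {b : Fin n → ℕ} {S : Sym2 (Fin n) → ZMod 2} (hS : S ∈ joins b)
    (a : Fin n → ℕ) :
    AddMonoidAlgebra.single (b, S) 1 * joinSum A a = joinSum A (b + a) := by
  have hinv : ∀ T, S + (S + T) = T := fun T => by rw [← add_assoc, pi_zmod_two_add_self, zero_add]
  rw [joinSum, joinSum, Finset.mul_sum]
  refine Finset.sum_nbij' (S + ·) (S + ·) (fun T hT => (add_mem_joins_iff hS).2 hT)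
    (fun T hT => (add_mem_joins_iff hS).1 (by rwa [hinv])) (fun T _ => hinv T) (fun T _ => hinv T)
    fun T _ => ?_
  rw [AddMonoidAlgebra.single_mul_single, one_mul, Prod.mk_add_mk]

end JoinSums

section CycleInvariants

variable {n} {A : Type*}

variable (n A) in
/-- The elements of the monoid algebra of bidegrees that are invariant under translation by the
cycle space, the group `joins 0` of graphs all of whose degrees are even. -/
noncomputable def cycleInvariants [CommSemiring A] : Ideal (AddMonoidAlgebra A (Bidegree n)) where
  carrier := {x | ∀ S ∈ joins 0, AddMonoidAlgebra.single (0, S) 1 * x = x}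
  zero_mem' := fun _ _ => mul_zero _
  add_mem' := fun hx hy S hS => by rw [mul_add, hx S hS, hy S hS]
  smul_mem' := fun y x hx S hS => by rw [smul_eq_mul, mul_left_comm, hx S hS]

lemma mem_cycleInvariants [CommSemiring A] {x : AddMonoidAlgebra A (Bidegree n)} :
    x ∈ cycleInvariants n A ↔ ∀ S ∈ joins 0, AddMonoidAlgebra.single (0, S) 1 * x = x :=
  Iff.rfl

lemma joinSum_mem_cycleInvariants [CommSemiring A] (a : Fin n → ℕ) :
    joinSum A a ∈ cycleInvariants n A :=
  mem_cycleInvariants.2 fun _ hS => by rw [single_mul_joinSum hS, zero_add]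

lemma mem_cycleInvariants_of_mul_mem [CommRing A] {x y : AddMonoidAlgebra A (Bidegree n)}
    (hy : y ∈ nonZeroDivisors _) (h : y * x ∈ cycleInvariants n A) : x ∈ cycleInvariants n A :=
  mem_cycleInvariants.2 fun S hS => by
    refine (mul_cancel_left_mem_nonZeroDivisors hy).1 ?_
    rw [mul_left_comm, mem_cycleInvariants.1 h S hS]

lemma coeff_eq_of_mem_cycleInvariants [CommSemiring A] {x : AddMonoidAlgebra A (Bidegree n)}
    (hx : x ∈ cycleInvariants n A) {a : Fin n → ℕ} {S T : Sym2 (Fin n) → ZMod 2}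
    (hS : S ∈ joins a) (hT : T ∈ joins a) : x.coeff (a, S) = x.coeff (a, T) := by
  have htranslate : ((a, T) : Bidegree n) = (0, T + S) + (a, S) := by
    rw [Prod.mk_add_mk, zero_add, add_assoc, pi_zmod_two_add_self, add_zero]
  rw [← mem_cycleInvariants.1 hx _ (add_mem_joins_zero hT hS), htranslate,
    AddMonoidAlgebra.coeff_single_mul_add, one_mul, mem_cycleInvariants.1 hx _
    (add_mem_joins_zero hT hS)]

lemma exists_eq_sum_smul_joinSum [CommSemiring A] {x : AddMonoidAlgebra A (Bidegree n)}
    (hx : x ∈ cycleInvariants n A) (hsupp : ∀ a T, x.coeff (a, T) ≠ 0 → T ∈ joins a) :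
    ∃ c : (Fin n → ℕ) → A, x = ∑ a ∈ x.coeff.support.image Prod.fst, c a • joinSum A a := by
  have hconst : ∀ a, ∃ r, ∀ T ∈ joins a, x.coeff (a, T) = r := fun a => by
    rcases (joins a).eq_empty_or_nonempty with h | ⟨S, hS⟩
    · simp [h]
    · exact ⟨_, fun T hT => coeff_eq_of_mem_cycleInvariants hx hT hS⟩
  choose c hc using hconst
  refine ⟨c, ?_⟩
  ext ⟨b, T⟩
  have hsum : (∑ a ∈ x.coeff.support.image Prod.fst, c a • joinSum A a).coeff (b, T) =
      if b ∈ x.coeff.support.image Prod.fst ∧ T ∈ joins b then c b else 0 := by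
    simp only [AddMonoidAlgebra.coeff_sum, Finsupp.finsetSum_apply, AddMonoidAlgebra.coeff_smul,
      Finsupp.smul_apply, coeff_joinSum, ite_and, smul_eq_mul, mul_ite, mul_one, mul_zero,
      Finset.sum_ite_eq]
  rw [hsum]
  split_ifs with h
  · exact hc b T h.2
  · by_contra hne
    exact h ⟨Finset.mem_image_of_mem Prod.fst (Finsupp.mem_support_iff.2 hne), hsupp b T hne⟩

end CycleInvariants

section Quotient

variable {n} {k}

lemma X_mul_X_eq_monomial (s t : Sym2 (Fin n)) :
    (X s * X t : R n k) = monomial (Finsupp.single s 1 + Finsupp.single t 1) 1 := by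
  simp [X]

lemma X_mul_X_sub_sq_mem_Jideal {i j : Fin n} (hij : i ≠ j) :
    (X s(i, i) * X s(j, j) - X s(i, j) ^ 2 : R n k) ∈ Jideal n k := by
  rcases hij.lt_or_gt with h | h
  · exact Ideal.subset_span ⟨i, j, h, rfl⟩
  · exact Ideal.subset_span ⟨j, i, h, by rw [mul_comm, Sym2.eq_swap (a := i) (b := j)]⟩

lemma monomial_add_single_two_sub_mem_Jideal (v : Sym2 (Fin n) →₀ ℕ) {i j : Fin n} (hij : i ≠ j) :
    (monomial (v + Finsupp.single s(i, j) 2) 1 -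
      monomial (v + (Finsupp.single s(i, i) 1 + Finsupp.single s(j, j) 1)) 1 : R n k) ∈
      Jideal n k := by
  have := Ideal.mul_mem_left _ (-monomial v 1) (X_mul_X_sub_sq_mem_Jideal (k := k) hij)
  rw [X_mul_X_eq_monomial, X_pow_eq_monomial, neg_mul, mul_sub, monomial_mul, monomial_mul,
    one_mul, neg_sub] at this
  exact this

lemma exists_isReduced_monomial_sub_mem_Jideal (u : Sym2 (Fin n) →₀ ℕ) :
    ∃ v, IsReduced v ∧ (monomial u 1 - monomial v 1 : R n k) ∈ Jideal n k := by
  let μ : (Sym2 (Fin n) →₀ ℕ) →+ ℕ :=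
    Finsupp.weight fun s : Sym2 (Fin n) => if s.IsDiag then 0 else 1
  induction h : μ u using Nat.strong_induction_on generalizing u with | _ m ih
  by_cases hu : IsReduced u
  · exact ⟨u, hu, by simp⟩
  · simp only [IsReduced, not_forall, not_le] at hu
    obtain ⟨s, hs, h2⟩ := hu
    induction s with | _ i j
    obtain ⟨v, rfl⟩ : ∃ v, u = v + Finsupp.single s(i, j) 2 :=
      ⟨_, (tsub_add_cancel_of_le (Finsupp.single_le_iff.2 h2)).symm⟩
    have hij : i ≠ j := hs
    have hμ : μ (v + (Finsupp.single s(i, i) 1 + Finsupp.single s(j, j) 1)) < m := by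
      subst h
      simp [μ, Finsupp.weight_single, hij]
    obtain ⟨w, hw, hmem⟩ := ih _ hμ _ rfl
    refine ⟨w, hw, ?_⟩
    simpa using Ideal.add_mem _ (monomial_add_single_two_sub_mem_Jideal v hij) hmem

variable (n k) in
/-- The map `x^u ↦ t^(bidegree u)`, whose kernel is `Jideal n k`. -/
noncomputable def bidegreeHom : R n k →ₐ[k] AddMonoidAlgebra k (Bidegree n) :=
  AddMonoidAlgebra.mapDomainAlgHom k k bidegree

lemma bidegreeHom_monomial (u : Sym2 (Fin n) →₀ ℕ) (r : k) :
    bidegreeHom n k (monomial u r) = AddMonoidAlgebra.single (bidegree u) r :=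
  mapDomainAlgHom_monomial bidegree u r

lemma Jideal_le_ker_bidegreeHom : Jideal n k ≤ RingHom.ker (bidegreeHom n k) := by
  rw [Jideal, Ideal.span_le]
  rintro _ ⟨i, j, -, rfl⟩
  rw [SetLike.mem_coe, RingHom.mem_ker, map_sub, sub_eq_zero, X_mul_X_eq_monomial,
    X_pow_eq_monomial, bidegreeHom_monomial, bidegreeHom_monomial, bidegree_single_two]

lemma bidegree_eq_of_monomial_sub_mem_Jideal {u v : Sym2 (Fin n) →₀ ℕ}
    (h : (monomial u 1 - monomial v 1 : R n k) ∈ Jideal n k) : bidegree u = bidegree v := by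
  have := Jideal_le_ker_bidegreeHom h
  rw [RingHom.mem_ker, map_sub, sub_eq_zero, bidegreeHom_monomial, bidegreeHom_monomial] at this
  exact AddMonoidAlgebra.single_left_injective one_ne_zero this

lemma monomial_sub_mem_Jideal {u v : Sym2 (Fin n) →₀ ℕ} (h : bidegree u = bidegree v) :
    (monomial u 1 - monomial v 1 : R n k) ∈ Jideal n k := by
  obtain ⟨u', hu', hu⟩ := exists_isReduced_monomial_sub_mem_Jideal (k := k) u
  obtain ⟨v', hv', hv⟩ := exists_isReduced_monomial_sub_mem_Jideal (k := k) v
  obtain rfl : u' = v' := hu'.eq_of_bidegree_eq hv' <|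
    (bidegree_eq_of_monomial_sub_mem_Jideal hu).symm.trans
      (h.trans (bidegree_eq_of_monomial_sub_mem_Jideal hv))
  simpa using Ideal.sub_mem _ hu hv

lemma ker_bidegreeHom : RingHom.ker (bidegreeHom n k) = Jideal n k :=
  le_antisymm (ker_mapDomainAlgHom_le _ fun _ _ => monomial_sub_mem_Jideal)
    Jideal_le_ker_bidegreeHom

end Quotient

section Image

variable {n} {k}

lemma bidegreeHom_monomial_mul_of_eq_joinSum (u : Sym2 (Fin n) →₀ ℕ) {p : R n k} {a : Fin n → ℕ}
    (hp : bidegreeHom n k p = joinSum k a) :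
    bidegreeHom n k (monomial u 1 * p) = joinSum k (VN n u + a) := by
  rw [map_mul, bidegreeHom_monomial, hp, bidegree_apply, single_mul_joinSum (parity_mem_joins u)]

lemma bidegreeHom_pplusAt {b : Fin n → ℕ} (hb : ∀ T ∈ joins b, ∀ i, degree T i ≤ b i) :
    bidegreeHom n k (pplusAt n k b) = joinSum k b := by
  have hmem : ∀ u : Sym2 (Fin n) →₀ ℕ,
      u ∈ (fiberFinset n b).filter (fun u => ∀ s : Sym2 (Fin n), ¬s.IsDiag → u s ≤ 1) ↔
        VN n u = b ∧ IsReduced u := fun u => by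
    rw [Finset.mem_filter, fiberFinset, Set.Finite.mem_toFinset]; rfl
  rw [pplusAt, map_sum, joinSum]
  refine Finset.sum_nbij parity (fun u hu => ?_) (fun u hu v hv huv => ?_) (fun T hT => ?_)
    fun u hu => ?_
  · exact ((hmem u).1 hu).1 ▸ parity_mem_joins u
  · obtain ⟨hVu, hu⟩ := (hmem u).1 hu
    obtain ⟨hVv, hv⟩ := (hmem v).1 hv
    exact hu.eq_of_bidegree_eq hv (Prod.ext (hVu.trans hVv.symm) huv)
  · obtain ⟨u, hu, hbid⟩ := exists_isReduced_bidegree_eq hT (hb T hT)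
    exact ⟨u, (hmem u).2 ⟨congrArg Prod.fst hbid, hu⟩, congrArg Prod.snd hbid⟩
  · rw [bidegreeHom_monomial, bidegree_apply, ((hmem u).1 hu).1]

lemma degree_le_bsel {j : Fin n} {T : Sym2 (Fin n) → ZMod 2} (hT : T ∈ joins (bsel n j))
    (i : Fin n) : degree T i ≤ bsel n j i := by
  have hmod : degree T i % 2 = bsel n j i % 2 := degree_modEq hT i
  have hle := degree_le T i
  have hbsel : n - 2 ≤ bsel n j i := by
    unfold bsel
    split_ifs <;> omega
  omega

lemma bidegreeHom_pplus (j : Fin n) : bidegreeHom n k (pplus n k j) = joinSum k (bsel n j) :=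
  bidegreeHom_pplusAt fun _ => degree_le_bsel

end Image

section Degrees

variable {n}

lemma even_sum_bsel (hn : 2 ≤ n) (j : Fin n) : Even (∑ i, bsel n j i) := by
  rcases Nat.even_or_odd n with h | h
  · simp only [bsel, Nat.even_iff.1 h, zero_ne_one, if_false, Finset.sum_const, Finset.card_univ,
      Fintype.card_fin, smul_eq_mul]
    exact h.mul_right _
  · simp only [bsel, Nat.odd_iff.1 h, if_true, Finset.sum_add_distrib, Finset.sum_const,
      Finset.card_univ, Fintype.card_fin, smul_eq_mul, Finset.sum_ite_eq', Finset.mem_univ]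
    exact (h.mul (Nat.Odd.sub_even hn h even_two)).add_one

lemma exists_bsel_le (hn : 2 ≤ n) {v : Sym2 (Fin n) →₀ ℕ} (hv : ∀ i, n - 2 ≤ VN n v i) :
    ∃ j, bsel n j ≤ VN n v := by
  rcases Nat.even_or_odd n with h | h
  · exact ⟨⟨0, by omega⟩, fun i => by simpa [bsel, Nat.even_iff.1 h] using hv i⟩
  · obtain ⟨j, hj⟩ : ∃ j, n - 2 < VN n v j := by
      by_contra! hle
      have hodd : Odd (∑ i, VN n v i) := by
        rw [Finset.sum_congr rfl fun i _ => (hle i).antisymm (hv i), Finset.sum_const,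
          Finset.card_univ, Fintype.card_fin]
        exact h.mul (Nat.Odd.sub_even hn h even_two)
      exact Nat.not_even_iff_odd.2 hodd (even_sum_VN v)
    refine ⟨j, fun i => ?_⟩
    rcases eq_or_ne i j with rfl | hij
    · simpa [bsel, Nat.odd_iff.1 h] using hj
    · simpa [bsel, Nat.odd_iff.1 h, hij] using hv i

lemma exists_VN_add_bsel (hn : 2 ≤ n) {v : Sym2 (Fin n) →₀ ℕ} (hv : ∀ i, n - 2 ≤ VN n v i) :
    ∃ j u, VN n u + bsel n j = VN n v := by
  obtain ⟨j, hj⟩ := exists_bsel_le hn hv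
  obtain ⟨d, hd⟩ := exists_add_of_le hj
  have heven := even_sum_VN v
  simp only [hd, Pi.add_apply, Finset.sum_add_distrib] at heven
  obtain ⟨u, hu⟩ := exists_VN_eq ((Nat.even_add.1 heven).1 (even_sum_bsel hn j))
  exact ⟨j, u, by rw [hu, hd, add_comm]⟩

lemma exists_VN_single_add_bsel (i j : Fin n) :
    ∃ v, VN n (Finsupp.single s(i, i) 1) + bsel n j = VN n v + bsel n i := by
  rcases Nat.even_or_odd n with h | h
  · exact ⟨Finsupp.single s(i, i) 1, funext fun l => by simp [bsel, Nat.even_iff.1 h]⟩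
  · refine ⟨Finsupp.single s(i, j) 1, funext fun l => ?_⟩
    simp only [VN_single, bsel, Nat.odd_iff.1 h, if_true, Pi.add_apply, Pi.smul_apply,
      Pi.single_apply]
    ring

end Degrees

section Saturation

variable {n} {k}

lemma exists_bidegree_eq_of_coeff_ne_zero {g : R n k} {γ : Bidegree n}
    (h : (bidegreeHom n k g).coeff γ ≠ 0) : ∃ u, bidegree u = γ := by
  obtain ⟨u, -, hu⟩ := Finset.mem_image.1 <|
    Finsupp.mapDomain_support (Finsupp.mem_support_iff.2 h)
  exact ⟨u, hu⟩

lemma mem_joins_of_coeff_ne_zero {g : R n k} {a : Fin n → ℕ} {T : Sym2 (Fin n) → ZMod 2}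
    (h : (bidegreeHom n k g).coeff (a, T) ≠ 0) : T ∈ joins a := by
  obtain ⟨u, hu⟩ := exists_bidegree_eq_of_coeff_ne_zero h
  obtain ⟨rfl, rfl⟩ := Prod.mk.inj hu
  exact parity_mem_joins u

/-- By invariance, one monomial of Veronese degree `a` brings along those of all `a`-joins, among
them one in which `i` has degree at least `n - 2`; it comes from a monomial of `R n k`. -/
lemma sub_two_le_of_coeff_ne_zero {g : R n k} (hg : bidegreeHom n k g ∈ cycleInvariants n k)
    {a : Fin n → ℕ} {T : Sym2 (Fin n) → ZMod 2} (h : (bidegreeHom n k g).coeff (a, T) ≠ 0)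
    (i : Fin n) : n - 2 ≤ a i := by
  have hT := mem_joins_of_coeff_ne_zero h
  obtain ⟨S, hS, hdeg⟩ := exists_mem_joins_le_degree hT i
  rw [← coeff_eq_of_mem_cycleInvariants hg hS hT] at h
  obtain ⟨u, hu⟩ := exists_bidegree_eq_of_coeff_ne_zero h
  obtain ⟨rfl, rfl⟩ := Prod.mk.inj hu
  exact hdeg.trans (degree_parity_le u i)

lemma exists_mem_span_pplus_bidegreeHom_eq (hn : 2 ≤ n) {v : Sym2 (Fin n) →₀ ℕ}
    (hv : ∀ i, n - 2 ≤ VN n v i) :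
    ∃ p ∈ Ideal.span (Set.range (pplus n k)), bidegreeHom n k p = joinSum k (VN n v) := by
  obtain ⟨j, u, h⟩ := exists_VN_add_bsel hn hv
  refine ⟨monomial u 1 * pplus n k j, Ideal.mul_mem_left _ _ (Ideal.subset_span ⟨j, rfl⟩), ?_⟩
  rw [bidegreeHom_monomial_mul_of_eq_joinSum u (bidegreeHom_pplus j), h]

lemma exists_mem_span_pplus_of_mem_cycleInvariants (hn : 2 ≤ n) {g : R n k}
    (hg : bidegreeHom n k g ∈ cycleInvariants n k) :
    ∃ p ∈ Ideal.span (Set.range (pplus n k)), bidegreeHom n k p = bidegreeHom n k g := by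
  let M := ((Ideal.span (Set.range (pplus n k))).restrictScalars k).map
    (bidegreeHom n k).toLinearMap
  suffices bidegreeHom n k g ∈ M from this
  obtain ⟨c, hc⟩ := exists_eq_sum_smul_joinSum hg fun a T => mem_joins_of_coeff_ne_zero
  rw [hc]
  refine M.sum_mem fun a ha => M.smul_mem _ ?_
  obtain ⟨⟨a, T⟩, hγ, rfl⟩ := Finset.mem_image.1 ha
  rw [Finsupp.mem_support_iff] at hγ
  obtain ⟨v, hv⟩ := exists_bidegree_eq_of_coeff_ne_zero hγ
  obtain ⟨rfl, rfl⟩ := Prod.mk.inj hv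
  exact exists_mem_span_pplus_bidegreeHom_eq hn (sub_two_le_of_coeff_ne_zero hg hγ)

lemma comap_cycleInvariants (hn : 2 ≤ n) : (cycleInvariants n k).comap (bidegreeHom n k) =
    Jideal n k + Ideal.span (Set.range (pplus n k)) := by
  refine le_antisymm (fun g hg => ?_) (sup_le ?_ (Ideal.span_le.2 ?_))
  · obtain ⟨p, hp, hpg⟩ := exists_mem_span_pplus_of_mem_cycleInvariants hn hg
    have hker : g - p ∈ Jideal n k := by
      rw [← ker_bidegreeHom, RingHom.mem_ker, map_sub, hpg, sub_self]
    exact sub_add_cancel g p ▸ Submodule.add_mem_sup hker hp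
  · exact ker_bidegreeHom.ge.trans (Ideal.ker_le_comap _)
  · rintro _ ⟨j, rfl⟩
    rw [SetLike.mem_coe, Ideal.mem_comap, bidegreeHom_pplus]
    exact joinSum_mem_cycleInvariants _

lemma bidegreeHom_prod_X_pow_mem_nonZeroDivisors (m : ℕ) :
    bidegreeHom n k ((∏ s, X s) ^ m) ∈ nonZeroDivisors (AddMonoidAlgebra k (Bidegree n)) := by
  rw [map_pow, map_prod]
  exact pow_mem (prod_mem fun s _ => by
    rw [X, bidegreeHom_monomial]
    exact single_one_mem_nonZeroDivisors _) m

lemma X_diag_mul_pplus_mem (i j : Fin n) :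
    X s(i, i) * pplus n k j ∈ Jideal n k + Ideal.span {pplus n k i} := by
  obtain ⟨v, hv⟩ := exists_VN_single_add_bsel i j
  have hker : X s(i, i) * pplus n k j - monomial v 1 * pplus n k i ∈ Jideal n k := by
    rw [← ker_bidegreeHom, RingHom.mem_ker, map_sub, X,
      bidegreeHom_monomial_mul_of_eq_joinSum _ (bidegreeHom_pplus j), hv,
      bidegreeHom_monomial_mul_of_eq_joinSum _ (bidegreeHom_pplus i), sub_self]
  exact sub_add_cancel (X s(i, i) * pplus n k j) _ ▸
    Submodule.add_mem_sup hker (Ideal.mul_mem_left _ _ (Ideal.mem_span_singleton_self _))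

lemma X_diag_mul_mem {g : R n k} (hg : g ∈ Jideal n k + Ideal.span (Set.range (pplus n k)))
    (i : Fin n) : X s(i, i) * g ∈ Jideal n k + Ideal.span {pplus n k i} := by
  have hle : Jideal n k + Ideal.span (Set.range (pplus n k)) ≤
      Submodule.comap (LinearMap.mulLeft (R n k) (X s(i, i)))
        (Jideal n k + Ideal.span {pplus n k i}) := by
    refine sup_le (fun f hf => Ideal.mem_sup_left (Ideal.mul_mem_left _ _ hf)) ?_
    rw [Submodule.span_le]
    rintro _ ⟨j, rfl⟩
    exact X_diag_mul_pplus_mem i j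
  exact hle hg

lemma mem_of_mul_mem (hn : 2 ≤ n) {f g : R n k}
    (hf : bidegreeHom n k f ∈ nonZeroDivisors (AddMonoidAlgebra k (Bidegree n)))
    (h : f * g ∈ Jideal n k + Ideal.span (Set.range (pplus n k))) :
    g ∈ Jideal n k + Ideal.span (Set.range (pplus n k)) := by
  rw [← comap_cycleInvariants hn, Ideal.mem_comap] at h ⊢
  exact mem_cycleInvariants_of_mul_mem hf (map_mul (bidegreeHom n k) f g ▸ h)

end Saturation

/-- For every `i ∈ [n]`, the saturation of `J_n + ⟨p⁺_{n,i}⟩` with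
respect to the product of all variables is `J_n + ⟨p⁺_{n,1}, …, p⁺_{n,n}⟩`. -/
theorem saturation_of_pplus (n : ℕ) (hn : 3 ≤ n) (k : Type*) [Field k] (i : Fin n) :
    {g : R n k | ∃ m : ℕ,
        (∏ s : Sym2 (Fin n), X s) ^ m * g ∈ Jideal n k + Ideal.span {pplus n k i}} =
      ↑(Jideal n k + Ideal.span (Set.range (pplus n k))) := by
  refine Set.Subset.antisymm ?_ fun g hg => ⟨1, ?_⟩
  · rintro g ⟨m, hm⟩
    have hle : Jideal n k + Ideal.span {pplus n k i} ≤
        Jideal n k + Ideal.span (Set.range (pplus n k)) :=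
      sup_le_sup_left (Ideal.span_mono (Set.singleton_subset_iff.2 (Set.mem_range_self i))) _
    exact mem_of_mul_mem (Nat.le_of_succ_le hn) (bidegreeHom_prod_X_pow_mem_nonZeroDivisors m)
      (hle hm)
  · obtain ⟨q, hq⟩ : X s(i, i) ∣ ∏ s : Sym2 (Fin n), (X s : R n k) :=
      Finset.dvd_prod_of_mem _ (Finset.mem_univ _)
    rw [pow_one, hq, mul_right_comm]
    exact Ideal.mul_mem_right _ _ (X_diag_mul_mem hg i)

end Veronese
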